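/- Let G be a finite group with subgroups C and U such that U is normalized by C, C ∩ U = {1}, and set H = CU ≅ C ⋉ U. Let ξ̃ be a complex character of H. Then Ind_U^G(Res_U^H ξ̃) = Σ_{φ ∈ Irr(C)} φ(1) · Ind_H^G( ξ̃ ⊗ Inf_C^H φ ), where Inf_C^H φ denotes the inflation of φ along the projection H → H/U ≅ C. -/

import Mathlib

open scoped Classical

namespace KawanakaAux

lemma simple_of_irr {C : Type} [Group C] [Fintype C] {V : Type} [AddCommGroup V] [Module ℂ V]
    [FiniteDimensional ℂ V] (ρ : Representation ℂ C V) (h : ρ.IsIrreducible) :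
    CategoryTheory.Simple (FDRep.of ρ) := by
  have := invertibleOfNonzero (NeZero.ne (Nat.card C : ℂ))
  rw [FDRep.simple_iff_char_is_norm_one]
  have h1 := Representation.char_orthonormal ρ ρ
  rw [if_pos ⟨Representation.Equiv.refl ρ⟩, inv_mul_eq_one₀ (NeZero.ne _)] at h1
  exact h1.symm

lemma trace_split {C : Type} [Group C] {V : Type} [AddCommGroup V] [Module ℂ V]
    [FiniteDimensional ℂ V] (ρ : Representation ℂ C V) (a b : Subrepresentation ρ)
    (hab : IsCompl a.toSubmodule b.toSubmodule) (g : C) :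
    ρ.character g = a.toRepresentation.character g + b.toRepresentation.character g := by
  unfold Representation.character
  rw [← LinearMap.trace_prodMap',
    ← LinearMap.trace_conj' _ (Submodule.prodEquivOfIsCompl _ _ hab)]
  congr 1
  ext v
  obtain ⟨w, rfl⟩ := (Submodule.prodEquivOfIsCompl _ _ hab).surjective v
  rw [LinearEquiv.conj_apply_apply, LinearEquiv.symm_apply_apply]
  obtain ⟨x, y⟩ := w
  simp [Submodule.coe_prodEquivOfIsCompl', Subrepresentation.toRepresentation]

lemma decomp {C : Type} [Group C] [Fintype C] (I : Type) [Fintype I] (W : I → FDRep ℂ C)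
    (hWall : ∀ V : FDRep ℂ C, CategoryTheory.Simple V → ∃ i, Nonempty (V ≅ W i)) (n : ℕ) :
    ∀ (V : Type) [AddCommGroup V] [Module ℂ V] [FiniteDimensional ℂ V]
      (ρ : Representation ℂ C V), Module.finrank ℂ V = n →
      ∃ m : I → ℂ, ∀ g, ρ.character g = ∑ i, m i * (W i).character g := by
  induction n using Nat.strong_induction_on with
  | _ n ih =>
  intro V _ _ _ ρ hn
  rcases subsingleton_or_nontrivial V with hV | hV
  · refine ⟨0, fun g => ?_⟩
    have : ρ g = 0 := Subsingleton.elim _ _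
    simp [Representation.character, this]
  by_cases hirr : ρ.IsIrreducible
  · obtain ⟨i, ⟨e⟩⟩ := hWall _ (simple_of_irr ρ hirr)
    refine ⟨Pi.single i 1, fun g => ?_⟩
    have h1 : ρ.character g = (W i).character g := congrFun (FDRep.char_iso e) g
    simp [h1, Pi.single_apply]
  · have hnt : Nontrivial (Subrepresentation ρ) := by
      refine ⟨⊥, ⊤, fun h => ?_⟩
      exact bot_ne_top (α := Submodule ℂ V) (congrArg Subrepresentation.toSubmodule h)
    have : ∃ a : Subrepresentation ρ, a ≠ ⊥ ∧ a ≠ ⊤ := by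
      by_contra! hcon
      exact hirr ⟨fun a => or_iff_not_imp_left.2 (hcon a)⟩
    obtain ⟨a, ha0, ha1⟩ := this
    have hss : ρ.IsSemisimpleRepresentation := by
      rw [Representation.isSemisimpleRepresentation_iff_isSemisimpleModule_asModule]
      infer_instance
    obtain ⟨b, hab⟩ := exists_isCompl a
    have hab' : IsCompl a.toSubmodule b.toSubmodule := by
      rw [isCompl_iff, disjoint_iff, codisjoint_iff] at hab ⊢
      exact ⟨congrArg Subrepresentation.toSubmodule hab.1,
        congrArg Subrepresentation.toSubmodule hab.2⟩
    have hat : a.toSubmodule ≠ ⊤ := fun h => ha1 (Subrepresentation.toSubmodule_injective h)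
    have hbt : b.toSubmodule ≠ ⊤ := fun h => by
      apply ha0
      apply Subrepresentation.toSubmodule_injective
      have := hab'.inf_eq_bot
      rw [h, inf_top_eq] at this
      exact this
    obtain ⟨m₁, h₁⟩ := ih _ (hn ▸ Submodule.finrank_lt hat) _
      a.toRepresentation rfl
    obtain ⟨m₂, h₂⟩ := ih _ (hn ▸ Submodule.finrank_lt hbt) _
      b.toRepresentation rfl
    refine ⟨m₁ + m₂, fun g => ?_⟩
    rw [trace_split ρ a b hab', h₁, h₂, ← Finset.sum_add_distrib]
    simp [add_mul]

/-- The left regular representation. -/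
noncomputable def reg (C : Type) [Group C] : Representation ℂ C (C →₀ ℂ) where
  toFun g := Finsupp.lmapDomain ℂ ℂ (fun x => g * x)
  map_one' := by ext; simp
  map_mul' a b := by ext; simp [mul_assoc]

lemma char_reg {C : Type} [Group C] [Fintype C] (g : C) :
    (reg C).character g = if g = 1 then (Fintype.card C : ℂ) else 0 := by
  unfold Representation.character
  rw [LinearMap.trace_eq_matrix_trace ℂ (Finsupp.basisSingleOne (R := ℂ) (ι := C))]
  simp only [Matrix.trace, Matrix.diag, LinearMap.toMatrix_apply, reg, MonoidHom.coe_mk, OneHom.coe_mk]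
  by_cases h : g = 1
  · subst h; simp
  · simp [h, Finsupp.single_apply]

lemma sum_irr {C : Type} [Group C] [Fintype C] (I : Type) [Fintype I] (W : I → FDRep ℂ C)
    (hWsimple : ∀ i, CategoryTheory.Simple (W i))
    (hWinj : ∀ i j, Nonempty (W i ≅ W j) → i = j)
    (hWall : ∀ V : FDRep ℂ C, CategoryTheory.Simple V → ∃ i, Nonempty (V ≅ W i)) (c : C) :
    ∑ i, (W i).character 1 * (W i).character c =
      if c = 1 then (Fintype.card C : ℂ) else 0 := by
  have := invertibleOfNonzero (NeZero.ne (Nat.card C : ℂ))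
  obtain ⟨m, hm⟩ := decomp I W hWall _ _ (reg C) rfl
  rw [← char_reg, hm]
  refine Finset.sum_congr rfl fun j _ => ?_
  congr 1
  have h1 : (Nat.card C : ℂ)⁻¹ * ∑ g : C, (reg C).character g *
      (W j).character g⁻¹ = (W j).character 1 := by
    simp only [char_reg, ite_mul, zero_mul, Finset.sum_ite_eq', Finset.mem_univ, if_true, inv_one]
    rw [← Nat.card_eq_fintype_card, inv_mul_cancel_left₀ (NeZero.ne _)]
  rw [← h1]
  simp only [hm, Finset.sum_mul]
  rw [Finset.sum_comm, Finset.mul_sum]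
  have h2 : ∀ i, (Nat.card C : ℂ)⁻¹ * ∑ g : C, m i * (W i).character g * (W j).character g⁻¹ =
      if i = j then m i else 0 := by
    intro i
    have := hWsimple i
    have := hWsimple j
    have h3 := FDRep.char_orthonormal (W i) (W j)
    have h4 : Nonempty (W i ≅ W j) ↔ i = j :=
      ⟨hWinj i j, fun h => h ▸ ⟨CategoryTheory.Iso.refl _⟩⟩
    simp only [h4] at h3
    simp only [mul_assoc]
    rw [← Finset.mul_sum, mul_left_comm, h3]
    simp
  rw [Finset.sum_congr rfl fun i _ => h2 i]
  simp

end KawanakaAux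

/-- Decomposition of a generalized Gelfand–Graev character into Kawanaka
characters, abstract form.  Let `G` be a finite group containing `H = C ⋉ U`
(realized as a semidirect product `U ⋊[φ] C` together with an injective
homomorphism `ι` into `G`; thus `U` is normalized by `C`, `C ∩ U = 1` and
`H = CU`).  Let `ξ̃` be a complex character of `H` and let `(W i)_{i : I}` be a
complete irredundant family of irreducible complex representations of `C`.
Then `Ind_U^G (Res_U^H ξ̃) = Σ_{φ ∈ Irr C} φ(1) · Ind_H^G (ξ̃ ⊗ Inf_C^H φ)`,
where both induced class functions are written out by the usual formula. -/
theorem stmt_3 (G : Type) [Group G] [Fintype G]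
    (C U : Type) [Group C] [Group U] [Fintype C] [Fintype U]
    (φ : C →* MulAut U) [Fintype (U ⋊[φ] C)]
    (ι : U ⋊[φ] C →* G) (hι : Function.Injective ι)
    (ξ : FDRep ℂ (U ⋊[φ] C))
    (I : Type) [Fintype I] (W : I → FDRep ℂ C)
    (hWsimple : ∀ i, CategoryTheory.Simple (W i))
    (hWinj : ∀ i j, Nonempty (W i ≅ W j) → i = j)
    (hWall : ∀ V : FDRep ℂ C, CategoryTheory.Simple V → ∃ i, Nonempty (V ≅ W i)) :
    ∀ g : G,
      (Fintype.card U : ℂ)⁻¹ *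
          ∑ x : G, ∑ u : U,
            (if x⁻¹ * g * x = ι (SemidirectProduct.inl u)
              then ξ.character (SemidirectProduct.inl u) else 0) =
      ∑ i : I, (W i).character 1 *
        ((Fintype.card (U ⋊[φ] C) : ℂ)⁻¹ *
          ∑ x : G, ∑ h : U ⋊[φ] C,
            (if x⁻¹ * g * x = ι h
              then ξ.character h * (W i).character (SemidirectProduct.rightHom h)
              else 0)) := by
  intro g
  have hcard : (Fintype.card (U ⋊[φ] C) : ℂ) = Fintype.card U * Fintype.card C := by
    rw [Fintype.card_congr SemidirectProduct.equivProd, Fintype.card_prod]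
    push_cast
    rfl
  have hC : (Fintype.card C : ℂ) ≠ 0 := NeZero.ne _
  have key := KawanakaAux.sum_irr I W hWsimple hWinj hWall
  have hR : ∀ x : G, ∑ i : I, (W i).character 1 * ∑ h : U ⋊[φ] C,
      (if x⁻¹ * g * x = ι h
        then ξ.character h * (W i).character (SemidirectProduct.rightHom h) else 0) =
      Fintype.card C * ∑ u : U, (if x⁻¹ * g * x = ι (SemidirectProduct.inl u)
              then ξ.character (SemidirectProduct.inl u) else 0) := by
    intro x
    simp only [Finset.mul_sum]
    rw [Finset.sum_comm]
    have h1 : ∀ h : U ⋊[φ] C, ∑ i : I, (W i).character 1 *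
        (if x⁻¹ * g * x = ι h
          then ξ.character h * (W i).character (SemidirectProduct.rightHom h) else 0) =
        if h.right = 1 then
          Fintype.card C * (if x⁻¹ * g * x = ι h then ξ.character h else 0) else 0 := by
      intro h
      have h2 := key h.right
      split_ifs with h3 h4 h4
      · rw [if_pos h4] at h2
        rw [← h2, Finset.sum_mul]
        refine Finset.sum_congr rfl fun i _ => ?_
        rw [SemidirectProduct.rightHom_eq_right]; ring
      · rw [if_neg h4] at h2
        rw [← mul_zero (ξ.character h), ← h2, Finset.mul_sum]
        refine Finset.sum_congr rfl fun i _ => ?_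
        rw [SemidirectProduct.rightHom_eq_right]; ring
      · simp
      · simp
    rw [Finset.sum_congr rfl fun h _ => h1 h]
    rw [← SemidirectProduct.equivProd.symm.sum_comp, Fintype.sum_prod_type]
    refine Finset.sum_congr rfl fun u _ => ?_
    rw [Finset.sum_eq_single 1]
    · exact if_pos rfl
    · intro c _ hc
      exact if_neg hc
    · simp
  have hR2 : ∀ i : I, (W i).character 1 * ((Fintype.card (U ⋊[φ] C) : ℂ)⁻¹ *
          ∑ x : G, ∑ h : U ⋊[φ] C,
            (if x⁻¹ * g * x = ι h
              then ξ.character h * (W i).character (SemidirectProduct.rightHom h)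
              else 0)) = (Fintype.card (U ⋊[φ] C) : ℂ)⁻¹ *
          ∑ x : G, (W i).character 1 * ∑ h : U ⋊[φ] C,
            (if x⁻¹ * g * x = ι h
              then ξ.character h * (W i).character (SemidirectProduct.rightHom h)
              else 0) := by
    intro i
    rw [← Finset.mul_sum, mul_left_comm]
  rw [Finset.sum_congr rfl fun i _ => hR2 i, ← Finset.mul_sum, Finset.sum_comm (s := (Finset.univ : Finset I)),
    Finset.sum_congr rfl fun x _ => hR x, ← Finset.mul_sum, hcard, mul_inv, mul_assoc,
    inv_mul_cancel_left₀ hC]
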